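/- Let A be a normal subgroup of a finite group G and let a ∈ A. Then a is a vanishing element of G (i.e., χ(a) = 0 for some irreducible character χ of G) if and only if there exists an irreducible character α of A such that the induced character α^G vanishes at a, i.e., α^G(a) = 0. -/

import Mathlib

def IsVanishing {G : Type} [Group G] (g : G) : Prop :=
  ∃ V : FDRep ℂ G, CategoryTheory.Simple V ∧ V.character g = 0

open scoped Classical in
/-- The induced class function `α^G` of a class function `α` on a subgroup `A`. -/
noncomputable def inducedChar {G : Type} [Group G] [Fintype G] (A : Subgroup G)
    (α : A → ℂ) (g : G) : ℂ :=
  (Nat.card A : ℂ)⁻¹ *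
    ∑ x : G, if h : x⁻¹ * g * x ∈ A then α ⟨x⁻¹ * g * x, h⟩ else 0

/-!
For a representation `σ` of `A` and `a ∈ A`, let `S` be the sum of the operators `σ (x a x⁻¹)`
over all `x ∈ G`. Conjugating by `A` permutes the summands, so `S` commutes with `A`; when `σ` is
the restriction of a representation `ρ` of `G`, it commutes with `G`. By Schur's lemma `S` vanishes
on an irreducible representation if and only if its trace does. The trace is `|A| α^G(a)` if `σ`
affords `α`, and `|G| χ(a)` if `ρ` affords `χ`. Vanishing of `S` passes from an irreducible
representation of `G` to an irreducible constituent of its restriction to `A`. Conversely, if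
`S = 0` on `σ`, then `S = 0` on the representation of `G` coinduced from `σ`, hence on any
irreducible constituent of it.
-/

open CategoryTheory Module Representation

universe u v

section Subrepresentations

variable {k G V : Type*} [Monoid G]

section Semiring

variable [Semiring k] [AddCommMonoid V] [Module k V]

/-- The inclusion of a subrepresentation, as an intertwining map. -/
def subrepresentationSubtype {ρ : Representation k G V} (p : Subrepresentation ρ) :
    p.toRepresentation.IntertwiningMap ρ :=
  p.toSubmodule.subtype.intertwiningMap_of_isIntertwiningMap _ _ fun _ _ ↦ rfl

theorem nontrivial_subrepresentation [Nontrivial V] (ρ : Representation k G V) :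
    Nontrivial (Subrepresentation ρ) :=
  ⟨⊥, ⊤, fun h ↦ bot_ne_top (α := Submodule k V) (congrArg Subrepresentation.toSubmodule h)⟩

end Semiring

variable [Field k] [AddCommGroup V] [Module k V] {ρ : Representation k G V}

theorem isIrreducible_toRepresentation_of_isAtom {p : Subrepresentation ρ} (hp : IsAtom p) :
    p.toRepresentation.IsIrreducible := by
  have : Nontrivial p.toSubmodule := Submodule.nontrivial_iff_ne_bot.2 fun h ↦
    hp.1 (Subrepresentation.toSubmodule_injective h)
  have := nontrivial_subrepresentation p.toRepresentation
  refine .of_forall_eq_top fun q hq ↦ ?_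
  let q' := ((subrepresentationSubtype p).comp (subrepresentationSubtype q)).range
  have hmap : q'.toSubmodule = q.toSubmodule.map p.toSubmodule.subtype :=
    (LinearMap.range_comp q.toSubmodule.subtype p.toSubmodule.subtype).trans
      (congrArg _ q.toSubmodule.range_subtype)
  have hle : q'.toSubmodule ≤ p.toSubmodule := hmap ▸ Submodule.map_subtype_le _ _
  have hinj := Submodule.map_injective_of_injective p.toSubmodule.injective_subtype
  apply Subrepresentation.toSubmodule_injective
  rcases hp.le_iff.1 (show q' ≤ p from hle) with h | h
  · have hq' : q.toSubmodule = ⊥ :=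
      hinj <| (hmap.symm.trans (congrArg _ h)).trans (Submodule.map_bot _).symm
    exact absurd (Subrepresentation.toSubmodule_injective hq') hq
  · exact hinj <| (hmap.symm.trans (congrArg _ h)).trans (Submodule.map_subtype_top _).symm

theorem exists_isIrreducible_toRepresentation [FiniteDimensional k V] [Nontrivial V]
    (ρ : Representation k G V) :
    ∃ p : Subrepresentation ρ, p.toRepresentation.IsIrreducible := by
  have : WellFoundedLT (Subrepresentation ρ) :=
    StrictMono.wellFoundedLT (f := Subrepresentation.toSubmodule) fun _ _ h ↦ h
  have : Nontrivial (Subrepresentation ρ) := nontrivial_subrepresentation ρ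
  obtain ⟨p, hp⟩ := IsAtomic.exists_atom (Subrepresentation ρ)
  exact ⟨p, isIrreducible_toRepresentation_of_isAtom hp⟩

theorem eq_zero_iff_trace_eq_zero_of_isIntertwiningMap [IsAlgClosed k] [CharZero k]
    [FiniteDimensional k V] [ρ.IsIrreducible] {f : End k V} (hf : ρ.IsIntertwiningMap ρ f) :
    f = 0 ↔ LinearMap.trace k V f = 0 := by
  have : Nontrivial V := IsSimpleModule.nontrivial (MonoidAlgebra k G) ρ.asModule
  obtain ⟨c, hc⟩ := IsIrreducible.algebraMap_intertwiningMap_bijective_of_isAlgClosed.surjective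
    (f.intertwiningMap_of_isIntertwiningMap ρ ρ hf.isIntertwining)
  obtain rfl : f = c • 1 := congrArg IntertwiningMap.toLinearMap hc.symm
  simp [finrank_pos.ne']

end Subrepresentations

section Simple

variable {k : Type u} {G : Type v} [Field k] [Monoid G]

theorem nontrivial_of_simple (V : FDRep k G) [Simple V] : Nontrivial V := by
  by_contra! h
  exact id_nonzero V (by ext v; exact Subsingleton.elim _ _)

theorem isIrreducible_of_simple (V : FDRep k G) [Simple V] : IsIrreducible V.ρ := by
  have := nontrivial_of_simple V
  have := nontrivial_subrepresentation V.ρ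
  refine .of_forall_eq_top fun p hp ↦ ?_
  let f : FDRep.of p.toRepresentation ⟶ V :=
    FDRep.forget₂HomLinearEquiv _ _ (Rep.ofHom (subrepresentationSubtype p))
  have : Mono f := (forget₂ (FDRep k G) (Rep k G)).mono_of_mono_map <|
    (Rep.mono_iff_injective _).2 p.toSubmodule.injective_subtype
  have hf : f ≠ 0 := by
    refine fun h ↦ hp <| Subrepresentation.toSubmodule_injective <|
      (Submodule.eq_bot_iff _).2 fun v hv ↦ ?_
    exact congrArg (fun f' : _ ⟶ V ↦ f'.hom (⟨v, hv⟩ : p.toSubmodule)) h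
  have := isIso_of_mono_of_nonzero hf
  refine Subrepresentation.toSubmodule_injective (Submodule.eq_top_iff'.2 fun v ↦ ?_)
  obtain ⟨w, rfl⟩ := (FDRep.isoToLinearEquiv (asIso f)).surjective v
  exact w.2

theorem simple_of_isIrreducible {V : Type u} [AddCommGroup V] [Module k V] [FiniteDimensional k V]
    (ρ : Representation k G V) [ρ.IsIrreducible] : Simple (FDRep.of ρ) := by
  let F := forget₂ (FDRep k G) (Rep k G) ⋙ Rep.toModuleMonoidAlgebra
  have : IsSimpleModule (MonoidAlgebra k G) ρ.asModule :=
    (irreducible_iff_isSimpleModule_asModule ρ).1 ‹_›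
  have : Simple (F.obj (FDRep.of ρ)) := (simple_iff_isSimpleModule' _).2 this
  have : F.PreservesZeroMorphisms := ⟨fun _ _ ↦ rfl⟩
  have : (Rep.toModuleMonoidAlgebra (k := k) (G := G)).IsEquivalence :=
    Rep.equivalenceModuleMonoidAlgebra.isEquivalence_functor
  exact F.simple_of_simple_obj _

theorem exists_simple_injective_intertwiningMap {V : Type u} [AddCommGroup V] [Module k V]
    [FiniteDimensional k V] [Nontrivial V] (ρ : Representation k G V) :
    ∃ (X : FDRep k G) (f : IntertwiningMap X.ρ ρ), Simple X ∧ Function.Injective f := by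
  obtain ⟨p, _⟩ := exists_isIrreducible_toRepresentation ρ
  exact ⟨.of p.toRepresentation, subrepresentationSubtype p, simple_of_isIrreducible _,
    p.toSubmodule.injective_subtype⟩

end Simple

section ConjSum

variable {G : Type*} [Group G] {A : Subgroup G}

theorem nontrivial_coindV {k W : Type*} [CommRing k] [AddCommGroup W] [Module k W] [Nontrivial W]
    (σ : Representation k A W) : Nontrivial (coindV A.subtype σ) := by
  classical
  obtain ⟨w, hw⟩ := exists_ne (0 : W)
  refine ⟨⟨_, fun s g ↦ Rep.indToCoindAux_mul_snd (A := Rep.of σ) 1 g w s⟩, 0, fun h ↦ hw ?_⟩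
  rw [← Rep.indToCoindAux_self (A := Rep.of σ) 1 w]
  exact congrFun (congrArg Subtype.val h) 1

variable [Fintype G] [A.Normal]
  {k V W : Type*} [Semiring k] [AddCommMonoid V] [Module k V] [AddCommMonoid W] [Module k W]

/-- The operator by which the sum of the `G`-conjugates of `a : A` acts in a representation of `A`.
The sum runs over `G`, so each conjugate is counted as often as the centralizer of `a` has
elements. -/
noncomputable def conjSum (σ : Representation k A W) (a : A) : End k W :=
  ∑ x : G, σ (MulAut.conjNormal x a)

theorem conjSum_apply (σ : Representation k A W) (a : A) (w : W) :
    conjSum σ a w = ∑ x : G, σ (MulAut.conjNormal x a) w := by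
  simp [conjSum]

theorem isIntertwiningMap_conjSum (σ : Representation k A W) (a : A) :
    σ.IsIntertwiningMap σ (conjSum σ a) where
  isIntertwining b := LinearMap.congr_fun <| show conjSum σ a * σ b = σ b * conjSum σ a by
    simp only [conjSum, Finset.sum_mul, Finset.mul_sum, ← map_mul]
    refine Fintype.sum_equiv (Equiv.mulLeft (b : G)⁻¹) _ _ fun x ↦ congrArg σ ?_
    ext
    simp [mul_assoc]

theorem isIntertwiningMap_conjSum_restrict (ρ : Representation k G V) (a : A) :
    ρ.IsIntertwiningMap ρ (conjSum (ρ.comp A.subtype) a) where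
  isIntertwining g := LinearMap.congr_fun <| show conjSum _ a * ρ g = ρ g * conjSum _ a by
    simp only [conjSum, Finset.sum_mul, Finset.mul_sum, MonoidHom.comp_apply, ← map_mul]
    refine Fintype.sum_equiv (Equiv.mulLeft g⁻¹) _ _ fun x ↦ congrArg ρ ?_
    simp [mul_assoc]

theorem conjSum_eq_zero_of_injective {σ : Representation k A V} {τ : Representation k A W}
    {f : V →ₗ[k] W} (hf : σ.IsIntertwiningMap τ f) (hinj : Function.Injective f) {a : A}
    (h : conjSum τ a = 0) : conjSum σ a = 0 := by
  ext v
  apply hinj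
  calc f (conjSum σ a v) = conjSum τ a (f v) := by
        simp only [conjSum_apply, map_sum, hf.isIntertwining]
    _ = f 0 := by simp [h]

theorem conjSum_coind_eq_zero {σ : Representation k A W} {a : A} (h : conjSum σ a = 0) :
    conjSum ((coind A.subtype σ).comp A.subtype) a = 0 := by
  ext f g
  have hf : (conjSum ((coind A.subtype σ).comp A.subtype) a f).1 g = conjSum σ a (f.1 g) := by
    simp only [conjSum_apply, Submodule.coe_sum, Finset.sum_apply]
    refine Fintype.sum_equiv (Equiv.mulLeft g) _ _ fun x ↦ ?_
    rw [← f.2]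
    change f.1 (g * _) = f.1 _
    simp [mul_assoc]
  simp [hf, h]

end ConjSum

section Trace

variable {G : Type*} [Group G] [Fintype G] {A : Subgroup G} [A.Normal]

theorem trace_conjSum_restrict {k V : Type*} [Field k] [AddCommGroup V] [Module k V]
    (ρ : Representation k G V) (a : A) :
    LinearMap.trace k V (conjSum (ρ.comp A.subtype) a) = Nat.card G * ρ.character a := by
  calc LinearMap.trace k V (conjSum (ρ.comp A.subtype) a)
    _ = ∑ x : G, ρ.character (x * a * x⁻¹) := by simp [conjSum, character]
    _ = Nat.card G * ρ.character a := by simp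

theorem character_eq_zero_iff_conjSum_eq_zero {k : Type*} [Field k] [IsAlgClosed k] [CharZero k]
    (V : FDRep k G) [Simple V] (a : A) :
    V.character a = 0 ↔ conjSum (MonoidHom.comp V.ρ A.subtype) a = 0 := by
  have := isIrreducible_of_simple V
  rw [eq_zero_iff_trace_eq_zero_of_isIntertwiningMap (isIntertwiningMap_conjSum_restrict V.ρ a),
    trace_conjSum_restrict]
  simp [FDRep.character, character]

theorem exists_simple_character_eq_zero {k : Type u} [Field k] [IsAlgClosed k] [CharZero k]
    {V : Type u} [AddCommGroup V] [Module k V] [FiniteDimensional k V] [Nontrivial V]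
    {ρ : Representation k G V} {a : A} (h : conjSum (ρ.comp A.subtype) a = 0) :
    ∃ X : FDRep k G, Simple X ∧ X.character a = 0 := by
  obtain ⟨X, f, _, hf⟩ := exists_simple_injective_intertwiningMap ρ
  refine ⟨X, ‹_›, (character_eq_zero_iff_conjSum_eq_zero X a).2 ?_⟩
  exact conjSum_eq_zero_of_injective ⟨fun b ↦ f.isIntertwining X.ρ ρ b⟩ hf h

end Trace

section InducedChar

variable {G : Type} [Group G] [Fintype G] {A : Subgroup G} [A.Normal]

theorem trace_conjSum {W : Type*} [AddCommGroup W] [Module ℂ W] (σ : Representation ℂ A W)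
    (a : A) : LinearMap.trace ℂ W (conjSum σ a) = Nat.card A * inducedChar A σ.character a := by
  have hconj (x : G) : x⁻¹ * a * x ∈ A := Subgroup.Normal.conj_mem' ‹_› _ a.2 x
  rw [inducedChar, mul_inv_cancel_left₀ (by simp [Nat.card_pos.ne']), conjSum, map_sum]
  refine Fintype.sum_equiv (Equiv.inv G) _ _ fun x ↦ ?_
  rw [dif_pos (hconj _), character]
  exact congrArg (fun b ↦ LinearMap.trace ℂ W (σ b)) (Subtype.ext (by simp))

theorem inducedChar_eq_zero_iff_conjSum_eq_zero (W : FDRep ℂ A) [Simple W] (a : A) :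
    inducedChar A W.character a = 0 ↔ conjSum W.ρ a = 0 := by
  have := isIrreducible_of_simple W
  rw [eq_zero_iff_trace_eq_zero_of_isIntertwiningMap (isIntertwiningMap_conjSum W.ρ a),
    trace_conjSum]
  change inducedChar A (character W.ρ) a = 0 ↔ _
  simp [Nat.card_pos.ne']

theorem exists_simple_inducedChar_eq_zero {W : Type} [AddCommGroup W] [Module ℂ W]
    [FiniteDimensional ℂ W] [Nontrivial W] {σ : Representation ℂ A W} {a : A}
    (h : conjSum σ a = 0) :
    ∃ X : FDRep ℂ A, Simple X ∧ inducedChar A X.character a = 0 := by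
  obtain ⟨X, f, _, hf⟩ := exists_simple_injective_intertwiningMap σ
  refine ⟨X, ‹_›, (inducedChar_eq_zero_iff_conjSum_eq_zero X a).2 ?_⟩
  exact conjSum_eq_zero_of_injective ⟨f.isIntertwining⟩ hf h

end InducedChar

theorem vanishing_iff_induced_char_zero (G : Type) [Group G] [Fintype G]
    (A : Subgroup G) [A.Normal] (a : G) (ha : a ∈ A) :
    IsVanishing a ↔
      ∃ W : FDRep ℂ A, CategoryTheory.Simple W ∧ inducedChar A W.character a = 0 := by
  lift a to A using ha
  constructor
  · rintro ⟨V, _, hV⟩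
    have := nontrivial_of_simple V
    exact exists_simple_inducedChar_eq_zero <|
      (character_eq_zero_iff_conjSum_eq_zero V a).1 hV
  · rintro ⟨W, _, hW⟩
    have := nontrivial_of_simple W
    have := nontrivial_coindV W.ρ
    have : FiniteDimensional ℂ (coindV A.subtype W.ρ) :=
      FiniteDimensional.finiteDimensional_submodule (V := G → W) _
    exact exists_simple_character_eq_zero <| conjSum_coind_eq_zero <|
      (inducedChar_eq_zero_iff_conjSum_eq_zero W a).1 hW
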